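/- Let q be a real number with 0 < q and q ≠ 1, let h₁, h₂, α₁, λ be real numbers and t₁, t₂ nonzero reals, and let (i,i') = (1,2) or (i,i') = (2,1). Assume λ + α₁ = -N for some positive integer N (so (q^{λ+α₁};q)_n = 0 for all n > N and the series below is a finite sum). Then the function g(x) = x^{λ} · Σ_{n=0}^{N} (q^{h_i+1/2}t_i/x;q)_n · [(q^{λ+α₁};q)_n / (q;q)_n] · (x/(q^{h_{i'}-1/2}t_{i'}))^n satisfies the variant of the confluent q-hypergeometric equation of type (0,2) for all x > 0. -/

import Mathlib

/-- The finite q-shifted factorial `(a;q)_n = ∏_{i=0}^{n-1} (1 - a q^i)`. -/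
noncomputable def qPoch (q a : ℝ) (n : ℕ) : ℝ :=
  ∏ i ∈ Finset.range n, (1 - a * q ^ i)

/-- The variant of the confluent q-hypergeometric equation of type (0,2) (for `x > 0`). -/
def confEq02 (q h₁ h₂ α₁ lam t₁ t₂ : ℝ) (g : ℝ → ℝ) : Prop :=
  ∀ x : ℝ, 0 < x →
    g (q * x)
    + q ^ (2 * lam + 1) * (1 - q ^ (-h₁ - 1/2) * t₁⁻¹ * x) * (1 - q ^ (-h₂ - 1/2) * t₂⁻¹ * x)
        * g (x / q)
    - (q ^ (α₁ + 2 * lam - h₁ - h₂) * t₁⁻¹ * t₂⁻¹ * x ^ 2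
        - q ^ (lam + 1/2) * (q ^ (-h₁) * t₁⁻¹ + q ^ (-h₂) * t₂⁻¹) * x
        + q ^ lam * (q + 1)) * g x = 0

/-!
Conjugating by `x ^ λ` turns the equation into `confOp02 f = 0`, with `a = q ^ (h₁ + 1/2) t₁`,
`b = q ^ (h₂ - 1/2) t₂` and `c = q ^ (λ + α₁)`. On the basis
`p n = (x - a)(x - a q)⋯(x - a q ^ (n - 1))` this operator is, up to the factor `x² / (a b)`,
two-term:
`p n ↦ (q⁻ⁿ - c) p n - b q (q⁻ⁿ - 1) p (n - 1)`.
Hence the images of the summands of `∑ v n • p n` telescope as soon as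
`b (1 - q ^ (n + 1)) v (n + 1) = (1 - c q ^ n) v n`, which is the recurrence of the
coefficients `(c;q)_n / ((q;q)_n b ^ n)`; the boundary term left after the summand `n = N` carries
the factor `q⁻ᴺ - c`, which vanishes because `λ + α₁ = -N`.
-/

section CommRing

variable {R : Type*} [CommRing R]

/-- The q-analogue `(x - a)(x - a q)⋯(x - a q ^ (n - 1))` of the power `(x - a) ^ n`, as a function
of `x`. It is `(a/x;q)_n x ^ n`, but without the division by `x`. -/
def qSubPow (q a : R) (n : ℕ) (x : R) : R :=
  ∏ i ∈ Finset.range n, (x - a * q ^ i)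

@[simp]
lemma qSubPow_zero (q a x : R) : qSubPow q a 0 x = 1 :=
  Finset.prod_range_zero _

lemma qSubPow_succ (q a : R) (n : ℕ) (x : R) :
    qSubPow q a (n + 1) x = qSubPow q a n x * (x - a * q ^ n) :=
  Finset.prod_range_succ _ n

lemma qSubPow_succ_mul (q a : R) (n : ℕ) (x : R) :
    qSubPow q a (n + 1) (q * x) = q ^ n * (q * x - a) * qSubPow q a n x := by
  induction n with
  | zero => simp [qSubPow_succ]
  | succ n ih =>
    rw [qSubPow_succ, ih, qSubPow_succ]
    ring

end CommRing

section Field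

variable {K : Type*} [Field K]

lemma sub_mul_qSubPow_div {q : K} (hq : q ≠ 0) (a : K) (n : ℕ) (x : K) :
    (x - a) * qSubPow q a n (x / q) = qSubPow q a (n + 1) x / q ^ n := by
  have h := qSubPow_succ_mul q a n (x / q)
  rw [mul_div_cancel₀ x hq] at h
  rw [h]
  field_simp

/-- The q-difference operator of the variant of the confluent q-hypergeometric equation of type
(0,2), conjugated by `x ^ λ` and divided by `q ^ λ`, with `a = q ^ (h₁ + 1/2) t₁`,
`b = q ^ (h₂ - 1/2) t₂` and `c = q ^ (λ + α₁)`. -/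
def confOp02 (q a b c : K) : (K → K) →ₗ[K] (K → K) where
  toFun f x := f (q * x) + q * (1 - x / a) * (1 - x / (q * b)) * f (x / q)
    - (c / (a * b) * x ^ 2 - (q / a + 1 / b) * x + (q + 1)) * f x
  map_add' f g := by
    ext x
    simp only [Pi.add_apply]
    ring
  map_smul' r f := by
    ext x
    simp only [Pi.smul_apply, smul_eq_mul, RingHom.id_apply]
    ring

lemma confOp02_apply (q a b c : K) (f : K → K) (x : K) :
    confOp02 q a b c f x = f (q * x) + q * (1 - x / a) * (1 - x / (q * b)) * f (x / q)
      - (c / (a * b) * x ^ 2 - (q / a + 1 / b) * x + (q + 1)) * f x :=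
  rfl

variable {q a b : K} (hq : q ≠ 0) (ha : a ≠ 0)
include hq ha

lemma confOp02_qSubPow (b c : K) (n : ℕ) (x : K) :
    confOp02 q a b c (qSubPow q a n) x = qSubPow q a n (q * x)
      - (q - x / b) / (a * q ^ n) * qSubPow q a (n + 1) x
      - (c / (a * b) * x ^ 2 - (q / a + 1 / b) * x + (q + 1)) * qSubPow q a n x := by
  have hdiv : q * (1 - x / a) * (1 - x / (q * b)) * qSubPow q a n (x / q)
      = -((q - x / b) / a) * ((x - a) * qSubPow q a n (x / q)) := by
    field_simp
    ring
  rw [confOp02_apply, hdiv, sub_mul_qSubPow_div hq]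
  field_simp
  ring

variable (hb : b ≠ 0) (c : K)
include hb

lemma confOp02_qSubPow_zero (x : K) :
    confOp02 q a b c (qSubPow q a 0) x = x ^ 2 / (a * b) * (1 - c) := by
  rw [confOp02_qSubPow hq ha, qSubPow_succ]
  simp only [qSubPow_zero]
  field_simp
  ring

lemma confOp02_qSubPow_succ (n : ℕ) (x : K) :
    confOp02 q a b c (qSubPow q a (n + 1)) x
      = x ^ 2 / (a * b) * (((q ^ (n + 1))⁻¹ - c) * qSubPow q a (n + 1) x
        - b * q * ((q ^ (n + 1))⁻¹ - 1) * qSubPow q a n x) := by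
  rw [confOp02_qSubPow hq ha, qSubPow_succ_mul, qSubPow_succ q a (n + 1), qSubPow_succ q a n]
  field_simp
  ring

lemma confOp02_sum_qSubPow {v : ℕ → K}
    (hv : ∀ n, b * (1 - q ^ (n + 1)) * v (n + 1) = (1 - c * q ^ n) * v n) (N : ℕ) (x : K) :
    confOp02 q a b c (∑ n ∈ Finset.range (N + 1), v n • qSubPow q a n) x
      = x ^ 2 / (a * b) * (((q ^ N)⁻¹ - c) * v N * qSubPow q a N x) := by
  induction N with
  | zero =>
    simp only [zero_add, Finset.sum_range_one, map_smul, Pi.smul_apply, smul_eq_mul,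
      confOp02_qSubPow_zero hq ha hb, qSubPow_zero, pow_zero, inv_one]
    ring
  | succ N ih =>
    have hvN : b * q * ((q ^ (N + 1))⁻¹ - 1) * v (N + 1) = ((q ^ N)⁻¹ - c) * v N :=
      calc b * q * ((q ^ (N + 1))⁻¹ - 1) * v (N + 1)
          = (q ^ N)⁻¹ * (b * (1 - q ^ (N + 1)) * v (N + 1)) := by field_simp; ring
        _ = ((q ^ N)⁻¹ - c) * v N := by rw [hv]; field_simp
    rw [Finset.sum_range_succ, map_add, Pi.add_apply, ih, map_smul, Pi.smul_apply, smul_eq_mul,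
      confOp02_qSubPow_succ hq ha hb]
    linear_combination -(x ^ 2 / (a * b) * qSubPow q a N x) * hvN

end Field

lemma qPoch_succ (q a : ℝ) (n : ℕ) : qPoch q a (n + 1) = qPoch q a n * (1 - a * q ^ n) :=
  Finset.prod_range_succ _ n

lemma one_sub_pow_succ_ne_zero {q : ℝ} (hq : 0 < q) (hq1 : q ≠ 1) (n : ℕ) :
    1 - q ^ (n + 1) ≠ 0 :=
  sub_ne_zero.2 fun h => hq1 ((pow_eq_one_iff_of_nonneg hq.le n.succ_ne_zero).1 h.symm)

lemma qPoch_self_ne_zero {q : ℝ} (hq : 0 < q) (hq1 : q ≠ 1) (n : ℕ) : qPoch q q n ≠ 0 :=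
  Finset.prod_ne_zero_iff.2 fun i _ => by
    rw [← pow_succ']
    exact one_sub_pow_succ_ne_zero hq hq1 i

lemma qPoch_div_mul_pow (q a : ℝ) {x : ℝ} (hx : x ≠ 0) (n : ℕ) :
    qPoch q (a / x) n * x ^ n = qSubPow q a n x := by
  induction n with
  | zero => simp [qPoch]
  | succ n ih =>
    rw [qPoch_succ, qSubPow_succ, ← ih]
    field_simp
    ring

lemma sum_qPoch_div_mul_pow_div (q a b : ℝ) {x : ℝ} (hx : x ≠ 0) (r : ℕ → ℝ) (M : ℕ) :
    ∑ n ∈ Finset.range M, qPoch q (a / x) n * r n * (x / b) ^ n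
      = (∑ n ∈ Finset.range M, (r n / b ^ n) • qSubPow q a n) x := by
  rw [Finset.sum_apply]
  refine Finset.sum_congr rfl fun n _ => ?_
  rw [Pi.smul_apply, smul_eq_mul, ← qPoch_div_mul_pow q a hx, div_pow]
  ring

lemma qPoch_div_qPoch_self_recurrence {q b : ℝ} (hq : 0 < q) (hq1 : q ≠ 1) (hb : b ≠ 0) (c : ℝ)
    (n : ℕ) :
    b * (1 - q ^ (n + 1)) * (qPoch q c (n + 1) / qPoch q q (n + 1) / b ^ (n + 1))
      = (1 - c * q ^ n) * (qPoch q c n / qPoch q q n / b ^ n) := by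
  have hqq := qPoch_self_ne_zero hq hq1 n
  have hpow := one_sub_pow_succ_ne_zero hq hq1 n
  rw [qPoch_succ, qPoch_succ, ← pow_succ']
  field_simp
  ring

lemma confEq02_swap {q h₁ h₂ α₁ lam t₁ t₂ : ℝ} {g : ℝ → ℝ}
    (hg : confEq02 q h₁ h₂ α₁ lam t₁ t₂ g) : confEq02 q h₂ h₁ α₁ lam t₂ t₁ g := by
  intro x hx
  rw [sub_right_comm _ h₂ h₁]
  linear_combination hg x hx

lemma confEq02_shift_coeff {q : ℝ} (hq : 0 < q) (h₁ h₂ lam t₁ t₂ x : ℝ) :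
    q ^ (2 * lam + 1) * (1 - q ^ (-h₁ - 1/2) * t₁⁻¹ * x) * (1 - q ^ (-h₂ - 1/2) * t₂⁻¹ * x)
      = q ^ lam * q ^ lam * (q * (1 - x / (q ^ (h₁ + 1/2) * t₁))
        * (1 - x / (q * (q ^ (h₂ - 1/2) * t₂)))) := by
  have hlam : q ^ (2 * lam + 1) = q ^ lam * q ^ lam * q := by
    rw [Real.rpow_add_one hq.ne', two_mul, Real.rpow_add hq]
  have hh₁ : q ^ (-h₁ - 1/2) = (q ^ (h₁ + 1/2))⁻¹ := by
    rw [← Real.rpow_neg hq.le]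
    ring_nf
  have hh₂ : q ^ (-h₂ - 1/2) = q⁻¹ * (q ^ (h₂ - 1/2))⁻¹ := by
    rw [← Real.rpow_neg hq.le, ← Real.rpow_neg_one, ← Real.rpow_add hq]
    ring_nf
  rw [hlam, hh₁, hh₂]
  simp only [div_eq_mul_inv, mul_inv]
  ring

lemma confEq02_middle_coeff {q : ℝ} (hq : 0 < q) (h₁ h₂ α₁ lam t₁ t₂ x : ℝ) :
    q ^ (α₁ + 2 * lam - h₁ - h₂) * t₁⁻¹ * t₂⁻¹ * x ^ 2
        - q ^ (lam + 1/2) * (q ^ (-h₁) * t₁⁻¹ + q ^ (-h₂) * t₂⁻¹) * x + q ^ lam * (q + 1)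
      = q ^ lam * (q ^ (lam + α₁) / (q ^ (h₁ + 1/2) * t₁ * (q ^ (h₂ - 1/2) * t₂)) * x ^ 2
        - (q / (q ^ (h₁ + 1/2) * t₁) + 1 / (q ^ (h₂ - 1/2) * t₂)) * x + (q + 1)) := by
  have hquad : q ^ (α₁ + 2 * lam - h₁ - h₂)
      = q ^ lam * q ^ (lam + α₁) * (q ^ (h₁ + 1/2))⁻¹ * (q ^ (h₂ - 1/2))⁻¹ := by
    simp only [← Real.rpow_neg hq.le, ← Real.rpow_add hq]
    ring_nf
  have hlin₁ : q ^ (lam + 1/2) * q ^ (-h₁) = q ^ lam * (q * (q ^ (h₁ + 1/2))⁻¹) := by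
    rw [mul_comm q, ← Real.rpow_neg hq.le, ← Real.rpow_add_one hq.ne', ← Real.rpow_add hq,
      ← Real.rpow_add hq]
    ring_nf
  have hlin₂ : q ^ (lam + 1/2) * q ^ (-h₂) = q ^ lam * (q ^ (h₂ - 1/2))⁻¹ := by
    simp only [← Real.rpow_neg hq.le, ← Real.rpow_add hq]
    ring_nf
  rw [hquad, mul_add, ← mul_assoc, ← mul_assoc, hlin₁, hlin₂]
  simp only [div_eq_mul_inv, mul_inv]
  ring

lemma confEq02_iff_confOp02_eq_zero {q : ℝ} (hq : 0 < q) (h₁ h₂ α₁ lam t₁ t₂ : ℝ) {f g : ℝ → ℝ}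
    (hg : ∀ x, 0 < x → g x = x ^ lam * f x) :
    confEq02 q h₁ h₂ α₁ lam t₁ t₂ g ↔ ∀ x, 0 < x →
      confOp02 q (q ^ (h₁ + 1/2) * t₁) (q ^ (h₂ - 1/2) * t₂) (q ^ (lam + α₁)) f x = 0 := by
  refine forall₂_congr fun x hx => ?_
  have hqlam : q ^ lam ≠ 0 := (Real.rpow_pos_of_pos hq lam).ne'
  have hxlam : x ^ lam ≠ 0 := (Real.rpow_pos_of_pos hx lam).ne'
  have hcancel : q ^ lam * (x ^ lam / q ^ lam) = x ^ lam := mul_div_cancel₀ _ hqlam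
  rw [confEq02_shift_coeff hq, confEq02_middle_coeff hq, hg _ (mul_pos hq hx),
    hg _ (div_pos hx hq), hg x hx, Real.mul_rpow hq.le hx.le, Real.div_rpow hx.le hq.le]
  refine Iff.trans (Eq.congr_left ?_) (mul_eq_zero_iff_left (mul_ne_zero hqlam hxlam))
  rw [confOp02_apply]
  linear_combination q ^ lam * (q * (1 - x / (q ^ (h₁ + 1/2) * t₁))
    * (1 - x / (q * (q ^ (h₂ - 1/2) * t₂)))) * f (x / q) * hcancel

lemma confEq02_sum_qPoch {q t₁ t₂ α₁ lam : ℝ} {N : ℕ} (h₁ h₂ : ℝ) (hq : 0 < q) (hq1 : q ≠ 1)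
    (ht₁ : t₁ ≠ 0) (ht₂ : t₂ ≠ 0) (hNlam : lam + α₁ = -(N : ℝ)) :
    confEq02 q h₁ h₂ α₁ lam t₁ t₂ (fun x =>
      x ^ lam * ∑ n ∈ Finset.range (N + 1),
        qPoch q (q ^ (h₁ + 1/2) * t₁ / x) n * (qPoch q (q ^ (lam + α₁)) n / qPoch q q n) *
          (x / (q ^ (h₂ - 1/2) * t₂)) ^ n) := by
  have ha : q ^ (h₁ + 1/2) * t₁ ≠ 0 := mul_ne_zero (Real.rpow_pos_of_pos hq _).ne' ht₁
  have hb : q ^ (h₂ - 1/2) * t₂ ≠ 0 := mul_ne_zero (Real.rpow_pos_of_pos hq _).ne' ht₂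
  have hc : (q ^ N)⁻¹ - q ^ (lam + α₁) = 0 := by
    rw [hNlam, Real.rpow_neg hq.le, Real.rpow_natCast, sub_self]
  refine (confEq02_iff_confOp02_eq_zero hq h₁ h₂ α₁ lam t₁ t₂ fun x hx => congrArg _
    (sum_qPoch_div_mul_pow_div q _ _ hx.ne' _ _)).2 fun x _ => ?_
  rw [confOp02_sum_qSubPow hq.ne' ha hb _ (qPoch_div_qPoch_self_recurrence hq hq1 hb _), hc,
    zero_mul, zero_mul, mul_zero]

theorem stmt10 (q h₁ h₂ α₁ lam t₁ t₂ hᵢ hᵢ' tᵢ tᵢ' : ℝ) (N : ℕ)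
    (hq : 0 < q) (hq1 : q ≠ 1) (ht₁ : t₁ ≠ 0) (ht₂ : t₂ ≠ 0)
    (hidx : (hᵢ, hᵢ', tᵢ, tᵢ') = (h₁, h₂, t₁, t₂) ∨ (hᵢ, hᵢ', tᵢ, tᵢ') = (h₂, h₁, t₂, t₁))
    (hN : 0 < N) (hNlam : lam + α₁ = -(N : ℝ)) :
    confEq02 q h₁ h₂ α₁ lam t₁ t₂ (fun x =>
      x ^ lam * ∑ n ∈ Finset.range (N + 1),
        qPoch q (q ^ (hᵢ + 1/2) * tᵢ / x) n * (qPoch q (q ^ (lam + α₁)) n / qPoch q q n) *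
          (x / (q ^ (hᵢ' - 1/2) * tᵢ')) ^ n) := by
  simp only [Prod.mk.injEq] at hidx
  obtain ⟨rfl, rfl, rfl, rfl⟩ | ⟨rfl, rfl, rfl, rfl⟩ := hidx
  · exact confEq02_sum_qPoch _ _ hq hq1 ht₁ ht₂ hNlam
  · exact confEq02_swap (confEq02_sum_qPoch _ _ hq hq1 ht₂ ht₁ hNlam)
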